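/- For δ₀ > 0 define x₁ = (5δ₀/4)/(1+δ₀), f(x) = (δ₀/4)·(x(1+δ₀) − δ₀)⁻¹, e^{−G(x)} = x²·(x/(x(1+δ₀)−δ₀))^{1/4}, and F(x) = (δ₀/4)∫_x^1 (x'/(x'(1+δ₀)−δ₀))^{5/4} dx'. Then there exists δ* > 0 such that for all δ₀ ∈ (0, δ*): F(x₁) + e^{−G(x₁)} < δ₀. -/

import Mathlib

/-- If `x / (x (1 + δ) - δ) ≤ K` on `[a, b]` and `K ^ p ≤ M`, the integral of the `p`-th power of
this ratio over `[a, b]` is at most `M (b - a)` in absolute value. -/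
theorem abs_integral_ratio_rpow_le {δ a b K M p : ℝ} (hp : 0 ≤ p) (ha : 0 ≤ a) (hab : a ≤ b)
    (hpos : ∀ x, a ≤ x → 0 < x * (1 + δ) - δ)
    (hK : ∀ x, a ≤ x → x ≤ K * (x * (1 + δ) - δ)) (hM : K ^ p ≤ M) :
    |∫ x in a..b, (x / (x * (1 + δ) - δ)) ^ p| ≤ M * (b - a) := by
  have h := intervalIntegral.norm_integral_le_of_norm_le_const (a := a) (b := b) (C := M)
    (f := fun x => (x / (x * (1 + δ) - δ)) ^ p) fun x hx => by
      rw [Set.uIoc_of_le hab] at hx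
      have hd := hpos x hx.1.le
      have hr : 0 ≤ x / (x * (1 + δ) - δ) := div_nonneg (ha.trans hx.1.le) hd.le
      rw [Real.norm_of_nonneg (Real.rpow_nonneg hr p)]
      exact (Real.rpow_le_rpow hr ((div_le_iff₀ hd).2 (hK x hx.1.le)) hp).trans hM
  rwa [abs_of_nonneg (sub_nonneg.2 hab)] at h

theorem intervalIntegrable_ratio_rpow {δ a b p : ℝ} (hp : 0 ≤ p) (hab : a ≤ b)
    (hpos : ∀ x, a ≤ x → 0 < x * (1 + δ) - δ) :
    IntervalIntegrable (fun x => (x / (x * (1 + δ) - δ)) ^ p) MeasureTheory.volume a b := by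
  apply ContinuousOn.intervalIntegrable
  rw [Set.uIcc_of_le hab]
  refine ContinuousOn.rpow_const (ContinuousOn.div (by fun_prop) (by fun_prop) ?_)
    fun _ _ => Or.inr hp
  exact fun x hx => (hpos x hx.1).ne'

/-- Final quantitative estimate in the trapped surface formation criterion:
`F(x₁) + e^{−G(x₁)} < δ₀` for all sufficiently small `δ₀`. -/
theorem stmt_15 :
    ∃ δstar > (0:ℝ), ∀ δ₀ : ℝ, 0 < δ₀ → δ₀ < δstar →
      (δ₀ / 4 * ∫ x' in ((5 * δ₀ / 4) / (1 + δ₀))..(1:ℝ),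
          (x' / (x' * (1 + δ₀) - δ₀)) ^ ((5:ℝ)/4)) +
        ((5 * δ₀ / 4) / (1 + δ₀)) ^ 2 *
          (((5 * δ₀ / 4) / (1 + δ₀)) /
            (((5 * δ₀ / 4) / (1 + δ₀)) * (1 + δ₀) - δ₀)) ^ ((1:ℝ)/4)
        < δ₀ := by
  refine ⟨1 / 1000, by norm_num, fun δ hδ hδ' => ?_⟩
  set a := 5 * δ / 4 / (1 + δ)
  have ha_mul : a * (1 + δ) = 5 * δ / 4 := div_mul_cancel₀ _ (by positivity)
  have ha_pos : 0 < a := by positivity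
  have ha_le : a ≤ 5 * δ / 4 := by nlinarith
  have hmul : ∀ x, a ≤ x → 5 * δ / 4 ≤ x * (1 + δ) := fun x hx => by
    rw [← ha_mul]; gcongr
  have hpos : ∀ x, a ≤ x → 0 < x * (1 + δ) - δ := fun x hx => by linarith [hmul x hx]
  have ha10 : a ≤ 10 * δ := by linarith
  have hnear := abs_integral_ratio_rpow_le (p := 5 / 4) (K := 5) (M := 25) (by norm_num)
    ha_pos.le ha10 hpos (fun x hx => by nlinarith [hmul x hx])
    (calc (5 : ℝ) ^ ((5 : ℝ) / 4) ≤ 5 ^ (2 : ℝ) :=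
          Real.rpow_le_rpow_of_exponent_le (by norm_num) (by norm_num)
      _ = 25 := by norm_num)
  have hfar := abs_integral_ratio_rpow_le (δ := δ) (a := 10 * δ) (b := 1) (p := 5 / 4)
    (K := 10 / 9) (M := 2) (by norm_num) (by positivity) (by linarith)
    (fun x hx => hpos x (ha10.trans hx)) (fun x hx => by nlinarith)
    (calc (10 / 9 : ℝ) ^ ((5 : ℝ) / 4) ≤ (10 / 9) ^ (2 : ℝ) :=
          Real.rpow_le_rpow_of_exponent_le (by norm_num) (by norm_num)
      _ ≤ 2 := by norm_num)
  have hsplit := intervalIntegral.integral_add_adjacent_intervals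
    (intervalIntegrable_ratio_rpow (p := 5 / 4) (by norm_num) ha10 hpos)
    (intervalIntegrable_ratio_rpow (p := 5 / 4) (b := 1) (by norm_num) (by linarith)
      fun x hx => hpos x (ha10.trans hx))
  have hF : ∫ x in a..1, (x / (x * (1 + δ) - δ)) ^ ((5 : ℝ) / 4) ≤ 2 + 250 * δ := by
    rw [← hsplit]
    linarith [(abs_le.1 hnear).2, (abs_le.1 hfar).2]
  have hd := hpos a le_rfl
  have hG : (a / (a * (1 + δ) - δ)) ^ ((1 : ℝ) / 4) ≤ 5 := by
    calc (a / (a * (1 + δ) - δ)) ^ ((1 : ℝ) / 4) ≤ 5 ^ ((1 : ℝ) / 4) :=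
          Real.rpow_le_rpow (by positivity) ((div_le_iff₀ hd).2 (by linarith)) (by norm_num)
      _ ≤ 5 ^ (1 : ℝ) := Real.rpow_le_rpow_of_exponent_le (by norm_num) (by norm_num)
      _ = 5 := Real.rpow_one 5
  calc _ ≤ δ / 4 * (2 + 250 * δ) + (5 * δ / 4) ^ 2 * 5 := by gcongr
    _ < δ := by nlinarith
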